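/- Sublevel-set measure estimate after a fixed time (abstract core of Lemma 5.2 of the paper, positive-time case): Let (B, μ) be a σ-finite measure space, let p > 1, c > 0, λ > 0, and let t₀ < t₂ be real numbers. Let w : B × (t₀, t₂) → ℝ be jointly measurable, and let W : [t₀, t₂] → ℝ be nondecreasing with W(t₀) ≥ 0, such that for a.e. t ∈ (t₀, t₂) at which W is differentiable one has c · ∫_B |w(x, t) − W(t)|^p dμ(x) ≤ W′(t). Then the product measure ν = μ ⊗ L¹ (L¹ being Lebesgue measure on the time interval) satisfies ν({(x, t) ∈ B × (t₀, t₂) : w(x, t) < −λ}) ≤ 1 / (c (p − 1) λ^{p−1}). -/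

import Mathlib

open MeasureTheory Set ENNReal

/-!
For a.e. `t`, Chebyshev's inequality on the slice `{x | w (x, t) < -lam}`, where
`|w (x, t) - W t| ≥ lam + W t`, bounds its `μ`-measure by `W' t / (c (lam + W t) ^ p)`. This is the
derivative at `t` of the nondecreasing function `F t = -(lam + W t) ^ (1 - p) / (c (p - 1))`
(`potential`). As `F` is monotone, `∫ F' ≤ F t₂ - F t₀` even though `W` may have jumps or a
singular part (`lintegral_deriv_le_of_monotoneOn`), and `F t₂ - F t₀ ≤ -F t₀` is at most
`1 / (c (p - 1) lam ^ (p - 1))` because `W t₀ ≥ 0`. Tonelli's theorem concludes.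
-/

/-- The antiderivative of `W' / (c (lam + W) ^ p)` at the points of differentiability of `W`. -/
noncomputable def potential (p c lam : ℝ) (W : ℝ → ℝ) (t : ℝ) : ℝ :=
  -(1 / (c * (p - 1))) * (lam + W t) ^ (1 - p)

/-- The inequality half of the fundamental theorem of calculus that survives for a merely monotone
function. -/
lemma lintegral_deriv_le_of_monotoneOn {f : ℝ → ℝ} {a b : ℝ} (hab : a ≤ b)
    (hf : MonotoneOn f (Icc a b)) :
    ∫⁻ t in Ioo a b, ENNReal.ofReal (deriv f t) ≤ ENNReal.ofReal (f b - f a) := by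
  have hf' : MonotoneOn f (uIcc a b) := by rwa [uIcc_of_le hab]
  have hint : IntegrableOn (deriv f) (Ioo a b) :=
    ((intervalIntegrable_iff_integrableOn_Icc_of_le hab).mp
      hf'.intervalIntegrable_deriv).mono_set Ioo_subset_Icc_self
  have hnn : 0 ≤ᵐ[volume.restrict (Ioo a b)] deriv f := by
    filter_upwards [ae_restrict_mem measurableSet_Ioo] with x hx
    rw [← derivWithin_of_mem_nhds (Icc_mem_nhds hx.1 hx.2)]
    exact hf.derivWithin_nonneg
  rw [← ofReal_integral_eq_lintegral_ofReal hint hnn]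
  apply ENNReal.ofReal_le_ofReal
  have hmem := hf'.intervalIntegral_deriv_mem_uIcc
  have hle : f a ≤ f b := hf (left_mem_Icc.2 hab) (right_mem_Icc.2 hab) hab
  rw [uIcc_of_le (by linarith), intervalIntegral.integral_of_le hab,
    integral_Ioc_eq_integral_Ioo] at hmem
  exact hmem.2

lemma potential_monotoneOn {p c lam : ℝ} (hp : 1 < p) (hc : 0 < c) {W : ℝ → ℝ} {s : Set ℝ}
    (hW : MonotoneOn W s) (hpos : ∀ t ∈ s, 0 < lam + W t) :
    MonotoneOn (potential p c lam W) s := by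
  intro a ha b hb hab
  have h1 : (lam + W b) ^ (1 - p) ≤ (lam + W a) ^ (1 - p) :=
    Real.rpow_le_rpow_of_nonpos (hpos a ha) (by linarith [hW ha hb hab]) (by linarith)
  have h2 : 0 ≤ 1 / (c * (p - 1)) := by
    have : 0 < p - 1 := by linarith
    positivity
  unfold potential
  nlinarith [mul_le_mul_of_nonneg_left h1 h2]

lemma deriv_potential {p c lam : ℝ} (hp : 1 < p) (hc : 0 < c) {W : ℝ → ℝ} {t : ℝ}
    (hd : DifferentiableAt ℝ W t) (hpos : 0 < lam + W t) :
    deriv (potential p c lam W) t = deriv W t / (c * (lam + W t) ^ p) := by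
  have h := (((hd.hasDerivAt.const_add lam).rpow_const (p := 1 - p)
    (Or.inl hpos.ne')).const_mul (-(1 / (c * (p - 1)))))
  have h' : HasDerivAt (potential p c lam W) _ t := h
  rw [h'.deriv]
  have hp1 : p - 1 ≠ 0 := by linarith
  have hpow : (lam + W t) ^ (1 - p - 1) = ((lam + W t) ^ p)⁻¹ := by
    rw [← Real.rpow_neg hpos.le]; congr 1; ring
  have := (Real.rpow_pos_of_pos hpos p).ne'
  rw [hpow]
  field_simp
  ring

/-- Chebyshev's inequality on a single time slice, with `V` and `D` in the role of `W t` and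
`W' t`. -/
lemma measure_slice_le {B : Type*} [MeasurableSpace B] (μ : Measure B) {p c lam V D : ℝ}
    (hp : 1 < p) (hc : 0 < c) (hpos : 0 < lam + V) {g : B → ℝ} (hg : Measurable g)
    (h : ENNReal.ofReal c * ∫⁻ x, ENNReal.ofReal (|g x - V| ^ p) ∂μ ≤ ENNReal.ofReal D) :
    μ {x | g x < -lam} ≤ ENNReal.ofReal (D / (c * (lam + V) ^ p)) := by
  have hq : 0 < (lam + V) ^ p := Real.rpow_pos_of_pos hpos p
  have hsub : {x | g x < -lam} ⊆
      {x | ENNReal.ofReal ((lam + V) ^ p) ≤ ENNReal.ofReal (|g x - V| ^ p)} := by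
    intro x hx
    have hx' : g x < -lam := hx
    apply ENNReal.ofReal_le_ofReal
    apply Real.rpow_le_rpow hpos.le _ (by linarith)
    rw [abs_sub_comm]
    exact le_trans (by linarith) (le_abs_self _)
  have hmeas : Measurable fun x => ENNReal.ofReal (|g x - V| ^ p) := by fun_prop
  rw [ENNReal.ofReal_div_of_pos (by positivity), ENNReal.le_div_iff_mul_le
    (Or.inl (by simp; positivity)) (Or.inl ENNReal.ofReal_ne_top)]
  calc μ {x | g x < -lam} * ENNReal.ofReal (c * (lam + V) ^ p)
      = ENNReal.ofReal c * (ENNReal.ofReal ((lam + V) ^ p) * μ {x | g x < -lam}) := by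
        rw [ENNReal.ofReal_mul hc.le]; ring
    _ ≤ ENNReal.ofReal c * ∫⁻ x, ENNReal.ofReal (|g x - V| ^ p) ∂μ := by
        gcongr
        exact le_trans (by gcongr) (mul_meas_ge_le_lintegral hmeas _)
    _ ≤ ENNReal.ofReal D := h

/-- Sublevel-set measure estimate after a fixed time (abstract core of Lemma 5.2,
positive-time case). -/
theorem sublevel_measure_estimate_after {B : Type*} [MeasurableSpace B]
    (μ : Measure B) [SigmaFinite μ] (p c lam t₀ t₂ : ℝ)
    (hp : 1 < p) (hc : 0 < c) (hlam : 0 < lam) (ht : t₀ < t₂)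
    (w : B × ℝ → ℝ) (hw : Measurable w)
    (W : ℝ → ℝ) (hW : MonotoneOn W (Set.Icc t₀ t₂)) (hW0 : 0 ≤ W t₀)
    (hineq : ∀ᵐ t ∂(volume.restrict (Set.Ioo t₀ t₂)),
      DifferentiableAt ℝ W t →
        ENNReal.ofReal c * ∫⁻ x, ENNReal.ofReal (|w (x, t) - W t| ^ p) ∂μ ≤
          ENNReal.ofReal (deriv W t)) :
    (μ.prod volume) {z : B × ℝ | z.2 ∈ Set.Ioo t₀ t₂ ∧ w z < -lam} ≤
      ENNReal.ofReal (1 / (c * (p - 1) * lam ^ (p - 1))) := by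
  have hWnn : ∀ t ∈ Icc t₀ t₂, 0 ≤ W t := fun t h =>
    hW0.trans (hW (left_mem_Icc.2 ht.le) h h.1)
  have hpos : ∀ t ∈ Icc t₀ t₂, 0 < lam + W t := fun t h => by linarith [hWnn t h]
  have hms : MeasurableSet {z : B × ℝ | z.2 ∈ Set.Ioo t₀ t₂ ∧ w z < -lam} :=
    (measurable_snd measurableSet_Ioo).inter (measurableSet_lt hw measurable_const)
  have hdiff : ∀ᵐ t ∂(volume.restrict (Ioo t₀ t₂)), DifferentiableAt ℝ W t := by
    filter_upwards [(hW.mono Ioo_subset_Icc_self).ae_differentiableWithinAt measurableSet_Ioo,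
      ae_restrict_mem measurableSet_Ioo] with t h hmem
    exact h.differentiableAt (Ioo_mem_nhds hmem.1 hmem.2)
  have hslice : ∀ t, μ ((fun x => (x, t)) ⁻¹'
      {z : B × ℝ | z.2 ∈ Set.Ioo t₀ t₂ ∧ w z < -lam}) =
      (Ioo t₀ t₂).indicator (fun t => μ {x | w (x, t) < -lam}) t := by
    intro t
    by_cases h : t ∈ Ioo t₀ t₂
    · rw [indicator_of_mem h]
      congr 1
      ext x
      exact and_iff_right h
    · rw [indicator_of_notMem h]
      convert measure_empty (μ := μ)
      ext x
      exact iff_of_false (fun hx => h hx.1) (notMem_empty x)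
  rw [Measure.prod_apply_symm hms]
  simp_rw [hslice]
  rw [lintegral_indicator measurableSet_Ioo]
  calc ∫⁻ t in Ioo t₀ t₂, μ {x | w (x, t) < -lam}
      ≤ ∫⁻ t in Ioo t₀ t₂, ENNReal.ofReal (deriv (potential p c lam W) t) := by
        apply lintegral_mono_ae
        filter_upwards [hdiff, hineq, ae_restrict_mem measurableSet_Ioo] with t hd hi hmem
        have hp' := hpos t (Ioo_subset_Icc_self hmem)
        rw [deriv_potential hp hc hd hp']
        exact measure_slice_le μ hp hc hp' (hw.comp measurable_prodMk_right) (hi hd)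
    _ ≤ ENNReal.ofReal (potential p c lam W t₂ - potential p c lam W t₀) :=
        lintegral_deriv_le_of_monotoneOn ht.le (potential_monotoneOn hp hc hW hpos)
    _ ≤ ENNReal.ofReal (1 / (c * (p - 1) * lam ^ (p - 1))) := by
        apply ENNReal.ofReal_le_ofReal
        have h2 : 0 ≤ 1 / (c * (p - 1)) := by
          have : 0 < p - 1 := by linarith
          positivity
        have h3 : 0 ≤ (lam + W t₂) ^ (1 - p) :=
          Real.rpow_nonneg (hpos t₂ (right_mem_Icc.2 ht.le)).le _
        have h4 : (lam + W t₀) ^ (1 - p) ≤ lam ^ (1 - p) :=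
          Real.rpow_le_rpow_of_nonpos hlam (by linarith) (by linarith)
        have h5 : 1 / (c * (p - 1) * lam ^ (p - 1)) = 1 / (c * (p - 1)) * lam ^ (1 - p) := by
          rw [show 1 - p = -(p - 1) by ring, Real.rpow_neg hlam.le, ← one_div_mul_one_div,
            one_div (lam ^ (p - 1))]
        rw [h5]
        unfold potential
        nlinarith [mul_le_mul_of_nonneg_left h4 h2, mul_nonneg h2 h3]
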